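/- Let G be a P4-sparse graph. Then G is L-integral if and only if G is a cograph. -/

import Mathlib

/-!
Cographs are Laplacian integral by Seinsche's theorem: on at least two vertices, a `P₄`-free graph
or its complement splits into two nonempty parts with no edges between them
(`exists_separation`). If the graph splits, a Laplacian eigenvector restricts to an eigenvector,
for the same eigenvalue, of a part on which it is nonzero. If the complement splits, an eigenvector
for `μ ≠ 0` has coordinate sum `0`, so it is an eigenvector of the complement for `n - μ`
(`IsLapEig.compl`). Induction on the number of vertices gives `IsLapEig.integral`.

Conversely, let `a - b - c - d` be an induced `P₄` in a `P₄`-sparse graph. Every other vertex is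
adjacent to none of the four, to all of them, or to exactly `b` and `c` (`IndPath.outer`).
Hence the vectors `(p, q, -q, -p)` supported on the path form an invariant subspace of the
Laplacian, on which it acts by the matrix with rows `(deg a, -1)` and `(-1, deg b + 1)`. Moreover
`deg a ≤ deg b`. An eigenvalue `μ` of this matrix satisfies `(deg a - μ) (deg b + 1 - μ) = 1`; were
it an integer, both factors would be equal to `1` or both to `-1`, forcing `deg a = deg b + 1`.
No decomposition theorem for `P₄`-sparse graphs is needed (`not_LIntegral_of_indPath`).
-/


open SimpleGraph Polynomial

/-- A finite simple graph is `L`-integral if every eigenvalue of its Laplacian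
matrix (over `ℝ`) is an integer. -/
def LIntegral {V : Type*} [Fintype V] [DecidableEq V] (G : SimpleGraph V)
    [DecidableRel G.Adj] : Prop :=
  ∀ μ ∈ spectrum ℝ (G.lapMatrix ℝ), ∃ z : ℤ, μ = (z : ℝ)

/-- The finite vertex set `W` induces a path `P₄` in `G`. -/
def InducesP4 {V : Type*} (G : SimpleGraph V) (W : Finset V) : Prop :=
  Nonempty (G.induce (W : Set V) ≃g SimpleGraph.pathGraph 4)

/-- A graph is `P₄`-sparse if every set of five vertices contains at most one
4-element subset inducing a path `P₄`. -/
def P4Sparse {V : Type*} (G : SimpleGraph V) : Prop :=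
  ∀ s : Finset V, s.card = 5 →
    {W : Finset V | W ⊆ s ∧ W.card = 4 ∧ InducesP4 G W}.Subsingleton

/-- A cograph is a graph with no induced subgraph isomorphic to the path `P₄`. -/
def IsCograph {V : Type*} (G : SimpleGraph V) : Prop :=
  ∀ s : Set V, ¬ Nonempty (G.induce s ≃g SimpleGraph.pathGraph 4)

/-! ### Induced paths on four vertices -/

/-- `a - b - c - d` is an induced path on four vertices. Distinctness of the four vertices
follows from the adjacency conditions. -/
def IndPath {V : Type*} (G : SimpleGraph V) (a b c d : V) : Prop :=
  G.Adj a b ∧ G.Adj b c ∧ G.Adj c d ∧ ¬ G.Adj a c ∧ ¬ G.Adj b d ∧ ¬ G.Adj a d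

lemma IndPath.ne {V : Type*} {G : SimpleGraph V} {a b c d : V} (h : IndPath G a b c d) :
    a ≠ b ∧ a ≠ c ∧ a ≠ d ∧ b ≠ c ∧ b ≠ d ∧ c ≠ d := by
  obtain ⟨h1, h2, h3, h4, h5, h6⟩ := h
  refine ⟨h1.ne, ?_, ?_, h2.ne, ?_, h3.ne⟩
  · rintro rfl; exact h6 h3
  · rintro rfl; exact h4 h3.symm
  · rintro rfl; exact h6 h1

lemma exists_indPath_of_iso {V : Type*} {G : SimpleGraph V} {s : Set V}
    (e : G.induce s ≃g SimpleGraph.pathGraph 4) : ∃ a b c d, IndPath G a b c d := by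
  have key (i j : Fin 4) : G.Adj (e.symm i : V) (e.symm j : V) ↔
      (SimpleGraph.pathGraph 4).Adj i j := by
    rw [← e.symm.map_rel_iff]; rfl
  refine ⟨e.symm 0, e.symm 1, e.symm 2, e.symm 3, ?_⟩
  simp [IndPath, key, pathGraph_adj]

lemma IndPath.iso {V : Type*} {G : SimpleGraph V} {a b c d : V} (h : IndPath G a b c d)
    {s : Set V} (hs : ∀ v, v ∈ s ↔ v = a ∨ v = b ∨ v = c ∨ v = d) :
    Nonempty (G.induce s ≃g SimpleGraph.pathGraph 4) := by
  obtain ⟨n1, n2, n3, n4, n5, n6⟩ := h.ne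
  obtain ⟨h1, h2, h3, h4, h5, h6⟩ := h
  let f : Fin 4 → s := ![⟨a, by simp [hs]⟩, ⟨b, by simp [hs]⟩, ⟨c, by simp [hs]⟩, ⟨d, by simp [hs]⟩]
  have hf : Function.Bijective f := by
    constructor
    · intro i j hij
      fin_cases i <;> fin_cases j <;> simp_all [f]
    · rintro ⟨v, hv⟩
      rcases (hs v).1 hv with rfl | rfl | rfl | rfl
      exacts [⟨0, rfl⟩, ⟨1, rfl⟩, ⟨2, rfl⟩, ⟨3, rfl⟩]
  refine ⟨(RelIso.mk (Equiv.ofBijective f hf) ?_).symm⟩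
  intro i j
  fin_cases i <;> fin_cases j <;>
    simp [f, pathGraph_adj, G.adj_comm, *]

lemma IsCograph.not_indPath {V : Type*} {G : SimpleGraph V} (hG : IsCograph G) (a b c d : V) :
    ¬ IndPath G a b c d := fun h =>
  hG {v | v = a ∨ v = b ∨ v = c ∨ v = d} (h.iso fun _ => Iff.rfl)

/-- `P₄` is self-complementary. -/
lemma IndPath.compl {V : Type*} {G : SimpleGraph V} {a b c d : V} (h : IndPath Gᶜ a b c d) :
    IndPath G b d a c := by
  have hn := h.ne
  simp only [IndPath, compl_adj] at *
  grind [G.adj_comm]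

/-! ### The `P₄`-sparse direction -/

/-- In a `P₄`-sparse graph, a vertex outside an induced `P₄` with vertices `a, b, c, d` is adjacent
to none of them, to all of them, or to exactly the two midpoints `b` and `c`. -/
lemma IndPath.outer {V : Type*} {G : SimpleGraph V} (hG : P4Sparse G) {a b c d : V}
    (h : IndPath G a b c d) {v : V} (hv : v ≠ a ∧ v ≠ b ∧ v ≠ c ∧ v ≠ d) :
    (G.Adj v a ↔ G.Adj v d) ∧ (G.Adj v b ↔ G.Adj v c) ∧ (G.Adj v a → G.Adj v b) := by
  classical
  obtain ⟨n1, n2, n3, n4, n5, n6⟩ := h.ne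
  have key : ∀ p q r t, IndPath G p q r t → ({p, q, r, t} : Finset V) ⊆ {a, b, c, d, v} →
      v ∉ ({p, q, r, t} : Finset V) := by
    intro p q r t hp hsub hvm
    have hcard : ({a, b, c, d, v} : Finset V).card = 5 := by
      grind
    have hp' := hp.ne
    have := hG _ hcard (x := {a, b, c, d}) (y := {p, q, r, t})
      ⟨by grind, by grind, h.iso (by simp)⟩ ⟨hsub, by grind, hp.iso (by simp)⟩
    rw [← this] at hvm
    grind
  -- each of the 13 excluded neighbourhoods of `v` makes one of these eight quadruples an induced
  -- `P₄` through `v`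
  have k1 := key v a b c
  have k2 := key v b c d
  have k3 := key a b c v
  have k4 := key b c d v
  have k5 := key d c v a
  have k6 := key a b v d
  have k7 := key a v d c
  have k8 := key d v a b
  obtain ⟨h1, h2, h3, h4, h5, h6⟩ := h
  simp only [IndPath, Finset.subset_iff, Finset.mem_insert, Finset.mem_singleton]
    at k1 k2 k3 k4 k5 k6 k7 k8
  simp only [G.adj_comm] at *
  grind [G.adj_comm]

lemma mem_spectrum_iff {V : Type*} [Fintype V] [DecidableEq V] (M : Matrix V V ℝ) (μ : ℝ) :
    μ ∈ spectrum ℝ M ↔ ∃ x, x ≠ 0 ∧ M.mulVec x = μ • x := by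
  rw [← Matrix.spectrum_toLin', ← Module.End.hasEigenvalue_iff_mem_spectrum]
  constructor
  · intro h
    obtain ⟨x, hx⟩ := h.exists_hasEigenvector
    exact ⟨x, hx.2, by simpa using hx.apply_eq_smul⟩
  · rintro ⟨x, hx, he⟩
    exact Module.End.hasEigenvalue_of_hasEigenvector
      (x := x) ⟨Module.End.mem_eigenspace_iff.2 (by simpa using he), hx⟩

lemma lap_apply {V : Type*} [Fintype V] [DecidableEq V] (G : SimpleGraph V)
    [DecidableRel G.Adj] (x : V → ℝ) (v : V) :
    (G.lapMatrix ℝ).mulVec x v = G.degree v * x v - ∑ u, if G.Adj v u then x u else 0 := by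
  rw [lapMatrix_mulVec_apply, ← Finset.sum_filter]
  congr 2
  ext; simp

lemma not_LIntegral_of_indPath {V : Type*} [Fintype V] [DecidableEq V]
    (G : SimpleGraph V) [DecidableRel G.Adj] (hG : P4Sparse G) {a b c d : V}
    (h : IndPath G a b c d) : ¬ LIntegral G := by
  have ho := fun v => h.outer hG (v := v)
  obtain ⟨n1, n2, n3, n4, n5, n6⟩ := h.ne
  obtain ⟨h1, h2, h3, h4, h5, h6⟩ := h
  have hb : b ∈ G.neighborFinset a := by simpa
  have hc : c ∈ G.neighborFinset d := by simpa using h3.symm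
  have ha : a ∈ G.neighborFinset b := by simpa using h1.symm
  have hc' : c ∈ (G.neighborFinset b).erase a := by simp [h2, n2.symm]
  have hd : d ∈ G.neighborFinset c := by simpa
  have hb' : b ∈ (G.neighborFinset c).erase d := by simp [h2.symm, n5]
  have e1 : (G.neighborFinset a).erase b = (G.neighborFinset d).erase c := by
    ext v; simp only [Finset.mem_erase, mem_neighborFinset]; grind [G.adj_comm, G.irrefl]
  have e2 : ((G.neighborFinset b).erase a).erase c = ((G.neighborFinset c).erase d).erase b := by
    ext v; simp only [Finset.mem_erase, mem_neighborFinset]; grind [G.adj_comm, G.irrefl]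
  have e3 : (G.neighborFinset a).erase b ⊆ (G.neighborFinset b).erase a := by
    intro v; simp only [Finset.mem_erase, mem_neighborFinset]; grind [G.adj_comm, G.irrefl]
  have dad : G.degree a = G.degree d := by
    have := congrArg Finset.card e1
    have p1 := Finset.card_pos.2 ⟨_, hb⟩
    have p2 := Finset.card_pos.2 ⟨_, hc⟩
    rw [Finset.card_erase_of_mem hb, Finset.card_erase_of_mem hc] at this
    simp only [card_neighborFinset_eq_degree] at *
    omega
  have dbc : G.degree b = G.degree c := by
    have := congrArg Finset.card e2
    have p1 := Finset.card_pos.2 ⟨_, hc'⟩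
    have p2 := Finset.card_pos.2 ⟨_, hb'⟩
    rw [Finset.card_erase_of_mem hc', Finset.card_erase_of_mem hb'] at this
    rw [Finset.card_erase_of_mem ha] at this p1
    rw [Finset.card_erase_of_mem hd] at this p2
    simp only [card_neighborFinset_eq_degree] at *
    omega
  have dab : G.degree a ≤ G.degree b := by
    have := Finset.card_le_card e3
    have p1 := Finset.card_pos.2 ⟨_, ha⟩
    rw [Finset.card_erase_of_mem hb, Finset.card_erase_of_mem ha] at this
    simp only [card_neighborFinset_eq_degree] at *
    omega
  -- an eigenvalue of the Laplacian on the antisymmetric vectors supported on the path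
  obtain ⟨μ, hμ⟩ : ∃ μ : ℝ, (G.degree a - μ) * (G.degree b + 1 - μ) = 1 := by
    set α : ℝ := (G.degree a : ℝ)
    set β : ℝ := (G.degree b : ℝ)
    refine ⟨((α + (β + 1)) + √((α - (β + 1)) ^ 2 + 4)) / 2, ?_⟩
    have := Real.sq_sqrt (show (0 : ℝ) ≤ (α - (β + 1)) ^ 2 + 4 by positivity)
    linear_combination this / 4
  intro hL
  set q : ℝ := (G.degree a : ℝ) - μ with hq
  -- the eigenvector `(1, q, -q, -1)` on `(a, b, c, d)`
  let x : V → ℝ := fun u =>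
    (if u = a then 1 else 0) + (if u = b then q else 0) - (if u = c then q else 0)
      - (if u = d then 1 else 0)
  have hmem : μ ∈ spectrum ℝ (G.lapMatrix ℝ) := by
    rw [mem_spectrum_iff]
    refine ⟨x, ?_, ?_⟩
    · intro h0
      simpa [x, n1, n2, n3] using congrFun h0 a
    · have hsum : ∀ v, (∑ u, if G.Adj v u then x u else 0) =
          (if G.Adj v a then 1 else 0) + (if G.Adj v b then q else 0)
            - (if G.Adj v c then q else 0) - (if G.Adj v d then 1 else 0) := by
        intro v
        have : ∀ u, (if G.Adj v u then x u else 0) =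
          (if u = a then (if G.Adj v a then 1 else 0) else 0)
          + (if u = b then (if G.Adj v b then q else 0) else 0)
          - (if u = c then (if G.Adj v c then q else 0) else 0)
          - (if u = d then (if G.Adj v d then 1 else 0) else 0) := by
          intro u; simp only [x]; grind
        simp [this, Finset.sum_add_distrib, Finset.sum_sub_distrib]
      ext v
      rw [lap_apply, hsum, Pi.smul_apply, smul_eq_mul]
      have sy := fun u w => G.adj_comm u w
      by_cases va : v = a
      · subst va
        simp [x, n1, n2, n3, h1, h4, h6]; linarith
      by_cases vb : v = b
      · subst vb
        simp [x, n1.symm, n4, n5, h1.symm, h2, h5]; linarith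
      by_cases vc : v = c
      · subst vc
        simp [x, n2.symm, n4.symm, n6, h2.symm, h3, sy v a, h4, ← dbc]; linarith
      by_cases vd : v = d
      · subst vd
        simp [x, n3.symm, n5.symm, n6.symm, h3.symm, sy v a, sy v b, h5, h6, ← dad]; linarith
      obtain ⟨o1, o2, -⟩ := ho v ⟨va, vb, vc, vd⟩
      simp [x, va, vb, vc, vd, o1, o2]
  obtain ⟨z, rfl⟩ := hL μ hmem
  have hz : ((G.degree a : ℤ) - z) * (G.degree b + 1 - z) = 1 := by
    rw [hq] at hμ; exact_mod_cast hμ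
  rcases Int.eq_one_or_neg_one_of_mul_eq_one' hz with h | h <;> omega

/-! ### Seinsche's theorem -/

/-- The induction step of Seinsche's theorem: if a `P₄`-free graph is disconnected on `s`, then the
graph or its complement is disconnected on `insert v s`. Otherwise some component `C` of `s`
contains a non-neighbour of `v`, and `v` has neighbours in every component; an edge `x - y` of `C`
with `y` but not `x` adjacent to `v`, continued by `v` and a neighbour `z` of `v` outside `C`, is an
induced `P₄`. -/
lemma separation_insert {V : Type*} [DecidableEq V] {G : SimpleGraph V} (hG : ∀ a b c d, ¬ IndPath G a b c d)
    {v : V} {s A : Finset V} (hv : v ∉ s) (hA : A ⊂ s) (hne : A.Nonempty)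
    (hsep : ∀ a ∈ A, ∀ b ∈ s, b ∉ A → ¬ G.Adj a b) :
    ∃ B : Finset V, B.Nonempty ∧ B ⊂ insert v s ∧
      ((∀ a ∈ B, ∀ b ∈ insert v s, b ∉ B → ¬ G.Adj a b) ∨
       (∀ a ∈ B, ∀ b ∈ insert v s, b ∉ B → G.Adj a b)) := by
  by_contra! hcon
  have hcl : ∀ B : Finset V, B.Nonempty → B ⊆ s → (∀ a ∈ B, ∀ b ∈ s, b ∉ B → ¬ G.Adj a b) →
      ∃ y ∈ B, G.Adj y v := by
    intro B hB hBs hBsep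
    obtain ⟨⟨a, ha, b, hb, hbB, hab⟩, -⟩ := hcon B hB
      ⟨hBs.trans (Finset.subset_insert _ _), fun h => hv (hBs (h (Finset.mem_insert_self _ _)))⟩
    rcases Finset.mem_insert.1 hb with rfl | hb
    · exact ⟨a, ha, hab⟩
    · exact absurd hab (hBsep a ha b hb hbB)
  obtain ⟨w, hw, hwv⟩ : ∃ w ∈ s, ¬ G.Adj v w := by
    obtain ⟨u, hu⟩ := hne
    obtain ⟨-, a, ha, b, hb, hbB, hab⟩ := hcon {v} (Finset.singleton_nonempty v)
      (by
        refine ⟨by simp, fun h => hv ?_⟩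
        have := h (Finset.mem_insert_of_mem (hA.1 hu))
        rw [Finset.mem_singleton] at this
        exact this ▸ hA.1 hu)
    rw [Finset.mem_singleton] at ha hbB
    subst ha
    exact ⟨b, (Finset.mem_insert.1 hb).resolve_left hbB, hab⟩
  -- `C` is the component of `w` in the subgraph induced on `s`
  let r : V → V → Prop := fun a b => G.Adj a b ∧ a ∈ s ∧ b ∈ s
  have := Classical.decPred fun u => Relation.ReflTransGen r w u
  let C : Finset V := s.filter fun u => Relation.ReflTransGen r w u
  have hwC : w ∈ C := Finset.mem_filter.2 ⟨hw, .refl⟩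
  have hCsep : ∀ a ∈ C, ∀ b ∈ s, b ∉ C → ¬ G.Adj a b := by
    intro a ha b hb hbC hab
    obtain ⟨has, har⟩ := Finset.mem_filter.1 ha
    exact hbC (Finset.mem_filter.2 ⟨hb, har.tail ⟨hab, has, hb⟩⟩)
  obtain ⟨y₀, hy₀, hy₀v⟩ := hcl C ⟨w, hwC⟩ (Finset.filter_subset _ _) hCsep
  obtain ⟨x, y, hx, hy, hxy, hxv, hyv⟩ :
      ∃ x y, x ∈ C ∧ y ∈ C ∧ G.Adj x y ∧ ¬ G.Adj x v ∧ G.Adj y v := by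
    have hr := (Finset.mem_filter.1 hy₀).2
    clear hy₀
    induction hr with
    | refl => exact absurd hy₀v.symm hwv
    | @tail p t hp hpt ih =>
      by_cases hpv : G.Adj p v
      · exact ih hpv
      · exact ⟨p, t, Finset.mem_filter.2 ⟨hpt.2.1, hp⟩,
          Finset.mem_filter.2 ⟨hpt.2.2, hp.tail hpt⟩, hpt.1, hpv, hy₀v⟩
  -- the component `C` lies on one side of the given separation, so it is not all of `s`
  have hside : ∀ u, Relation.ReflTransGen r w u → (u ∈ A ↔ w ∈ A) := by
    intro u hu
    induction hu with
    | refl => rfl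
    | @tail p t _ hpt ih =>
      rw [← ih]
      constructor
      · intro ht; by_contra hp; exact hsep t ht p hpt.2.1 hp hpt.1.symm
      · intro hp; by_contra ht; exact hsep p hp t hpt.2.2 ht hpt.1
  obtain ⟨z, hz, hzv⟩ := hcl (s \ C)
    (by
      obtain ⟨t, hts, htA⟩ := Finset.exists_of_ssubset hA
      obtain ⟨u, hu⟩ := hne
      by_cases hwA : w ∈ A
      · exact ⟨t, Finset.mem_sdiff.2 ⟨hts, fun h =>
          htA ((hside t (Finset.mem_filter.1 h).2).2 hwA)⟩⟩
      · exact ⟨u, Finset.mem_sdiff.2 ⟨hA.1 hu, fun h =>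
          hwA ((hside u (Finset.mem_filter.1 h).2).1 hu)⟩⟩)
    Finset.sdiff_subset
    (by
      intro a ha b hb hbC hab
      rw [Finset.mem_sdiff] at ha hbC
      exact hCsep b (by tauto) a ha.1 ha.2 hab.symm)
  rw [Finset.mem_sdiff] at hz
  exact hG x y v z ⟨hxy, hyv, hzv.symm, hxv, hCsep y hy z hz.1 hz.2, hCsep x hx z hz.1 hz.2⟩

/-- **Seinsche's theorem**: a `P₄`-free graph on at least two vertices is disconnected, or its
complement is. -/
lemma exists_separation {V : Type*} {G : SimpleGraph V} (hG : ∀ a b c d, ¬ IndPath G a b c d)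
    (s : Finset V) (hs : s.Nontrivial) :
    ∃ B : Finset V, B.Nonempty ∧ B ⊂ s ∧
      ((∀ a ∈ B, ∀ b ∈ s, b ∉ B → ¬ G.Adj a b) ∨
       (∀ a ∈ B, ∀ b ∈ s, b ∉ B → G.Adj a b)) := by
  classical
  induction s using Finset.induction_on with
  | empty => simp at hs
  | insert v s hv ih =>
    by_cases hs' : s.Nontrivial
    · obtain ⟨A, hne, hA, hsep | hsep⟩ := ih hs'
      · exact separation_insert hG hv hA hne hsep
      · obtain ⟨B, hB, hBs, h⟩ := separation_insert (G := Gᶜ)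
          (fun a b c d h => hG _ _ _ _ h.compl) hv hA hne
          (fun a ha b hb hbA h => (compl_adj _ _ _ |>.1 h).2 (hsep a ha b hb hbA))
        refine ⟨B, hB, hBs, ?_⟩
        have hab : ∀ a ∈ B, ∀ b, b ∉ B → a ≠ b := fun a ha b hb h => hb (h ▸ ha)
        rcases h with h | h
        · right
          intro a ha b hb hbB
          have := h a ha b hb hbB
          simp only [compl_adj] at this
          have := hab a ha b hbB
          tauto
        · left
          intro a ha b hb hbB
          exact ((compl_adj _ _ _).1 (h a ha b hb hbB)).2
    · -- then `s` is a single vertex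
      have hw : ∀ w ∈ s, ∀ u ∈ s, u = w := fun w hw u hu => by
        by_contra huw
        exact hs' ⟨u, hu, w, hw, huw⟩
      obtain ⟨w, hws⟩ : s.Nonempty := by
        rw [Finset.nonempty_iff_ne_empty]
        rintro rfl
        simp at hs
      have hwv : w ≠ v := fun h => hv (h ▸ hws)
      refine ⟨{v}, Finset.singleton_nonempty v, ⟨by simp, fun h => hwv
        (Finset.mem_singleton.1 (h (Finset.mem_insert_of_mem hws)))⟩, ?_⟩
      by_cases hvw : G.Adj v w
      · right
        intro a ha b hb hba
        rw [Finset.mem_singleton] at ha hba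
        rw [ha, hw w hws b ((Finset.mem_insert.1 hb).resolve_left hba)]
        exact hvw
      · left
        intro a ha b hb hba
        rw [Finset.mem_singleton] at ha hba
        rw [ha, hw w hws b ((Finset.mem_insert.1 hb).resolve_left hba)]
        exact hvw

/-! ### Integrality for cographs -/

/-- `x` satisfies the equation `L x = μ x` for the Laplacian of the subgraph of `G` induced on
the finite set `s`; the values of `x` outside `s` play no role, and `x` may vanish on `s`. -/
def IsLapEig {V : Type*} (G : SimpleGraph V) (s : Finset V) (x : V → ℝ) (μ : ℝ) : Prop :=
  open Classical in ∀ a ∈ s, (∑ b ∈ s, if G.Adj a b then x a - x b else 0) = μ * x a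

/-- On vectors orthogonal to the constants, the Laplacians of a graph on `n` vertices and of its
complement add up to `n`; eigenvectors for `μ ≠ 0` are of this kind. -/
lemma IsLapEig.compl {V : Type*} {G : SimpleGraph V} {s : Finset V} {x : V → ℝ} {μ : ℝ}
    (h : IsLapEig G s x μ) (hμ : μ ≠ 0) : IsLapEig Gᶜ s x (s.card - μ) := by
  classical
  have hsum : ∑ a ∈ s, x a = 0 := by
    have h1 : μ * ∑ a ∈ s, x a = ∑ a ∈ s, ∑ b ∈ s, if G.Adj a b then x a - x b else 0 := by
      rw [Finset.mul_sum]
      exact Finset.sum_congr rfl fun a ha => (by convert (h a ha).symm)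
    have h2 : (∑ a ∈ s, ∑ b ∈ s, if G.Adj a b then x a - x b else 0) =
        -∑ a ∈ s, ∑ b ∈ s, if G.Adj a b then x a - x b else 0 := by
      conv_lhs => rw [Finset.sum_comm]
      simp only [← Finset.sum_neg_distrib]
      refine Finset.sum_congr rfl fun a _ => Finset.sum_congr rfl fun b _ => ?_
      simp only [G.adj_comm b a]
      split_ifs <;> simp
    have h3 : μ * ∑ a ∈ s, x a = 0 := by linarith
    exact (mul_eq_zero.1 h3).resolve_left hμ
  intro a ha
  have h1 : (∑ b ∈ s, if Gᶜ.Adj a b then x a - x b else 0) =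
      ∑ b ∈ s, (x a - x b - if G.Adj a b then x a - x b else 0) := by
    refine Finset.sum_congr rfl fun b _ => ?_
    by_cases hab : a = b
    · subst hab; simp
    · by_cases hadj : G.Adj a b <;> simp [hab, hadj]
  have h2 : (∑ b ∈ s, if G.Adj a b then x a - x b else 0) = μ * x a := by convert h a ha
  rw [Finset.sum_sub_distrib, Finset.sum_sub_distrib, hsum, h2, Finset.sum_const,
    nsmul_eq_mul] at h1
  calc _ = _ := by congr!
    _ = _ := h1
    _ = _ := by ring

/-- An eigenvector restricts to any union of components. -/
lemma IsLapEig.restrict {V : Type*} {G : SimpleGraph V} {s B : Finset V} {x : V → ℝ} {μ : ℝ}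
    (h : IsLapEig G s x μ) (hB : B ⊆ s) (hsep : ∀ a ∈ B, ∀ b ∈ s, b ∉ B → ¬ G.Adj a b) :
    IsLapEig G B x μ := by
  intro a ha
  rw [← h a (hB ha)]
  exact Finset.sum_subset hB fun b hb hbB => if_neg (hsep a ha b hb hbB)

/-- Laplacian eigenvalues of induced subgraphs of a `P₄`-free graph are integers. The induction on
the number `n` of vertices ranges over all graphs on `V`, so that it can pass to complements. -/
lemma IsLapEig.integral {V : Type*} (n : ℕ) : ∀ {G : SimpleGraph V}
    (_ : ∀ a b c d, ¬ IndPath G a b c d) {s : Finset V} (_ : s.card = n) {x : V → ℝ} {μ : ℝ}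
    (_ : IsLapEig G s x μ) (_ : ∃ a ∈ s, x a ≠ 0), ∃ z : ℤ, μ = z := by
  classical
  induction n using Nat.strong_induction_on with
  | _ n ih =>
    -- the case of a disconnected induced subgraph
    have disc : ∀ {G : SimpleGraph V}
        (_ : ∀ a b c d, ¬ IndPath G a b c d) {s : Finset V} (_ : s.card = n) {x : V → ℝ} {μ : ℝ}
        (_ : IsLapEig G s x μ) (_ : ∃ a ∈ s, x a ≠ 0) {B : Finset V} (_ : B.Nonempty)
        (_ : B ⊂ s) (_ : ∀ a ∈ B, ∀ b ∈ s, b ∉ B → ¬ G.Adj a b), ∃ z : ℤ, μ = z := by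
      intro G hG s hs x μ hx hne B hB hBs hsep
      obtain ⟨a, ha, hxa⟩ := hne
      by_cases haB : a ∈ B
      · exact ih _ (hs ▸ Finset.card_lt_card hBs) hG rfl (hx.restrict hBs.1 hsep) ⟨a, haB, hxa⟩
      · refine ih _ (hs ▸ Finset.card_lt_card (Finset.sdiff_ssubset hBs.1 hB)) hG rfl
          (hx.restrict (B := s \ B) Finset.sdiff_subset ?_) ⟨a, Finset.mem_sdiff.2 ⟨ha, haB⟩, hxa⟩
        intro p hp q hq hqB hpq
        rw [Finset.mem_sdiff] at hp hqB
        exact hsep q (by tauto) p hp.1 hp.2 hpq.symm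
    intro G hG s hs x μ hx hne
    by_cases hμ : μ = 0
    · exact ⟨0, by simp [hμ]⟩
    by_cases hnt : s.Nontrivial
    · obtain ⟨B, hB, hBs, hsep | hsep⟩ := exists_separation hG s hnt
      · exact disc hG hs hx hne hB hBs hsep
      · obtain ⟨z, hz⟩ := disc (G := Gᶜ) (fun a b c d h => hG _ _ _ _ h.compl) hs
          (hx.compl hμ) hne hB hBs
          (fun a ha b hb hbB h => ((compl_adj _ _ _).1 h).2 (hsep a ha b hb hbB))
        exact ⟨s.card - z, by push_cast; linarith⟩
    · -- a one-vertex graph has zero Laplacian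
      obtain ⟨a, ha, hxa⟩ := hne
      have h0 := hx a ha
      rw [Finset.sum_eq_zero] at h0
      · exact absurd ((mul_eq_zero.1 h0.symm).resolve_right hxa) hμ
      · intro b hb
        have : b = a := by
          by_contra hba
          exact hnt ⟨b, hb, a, ha, hba⟩
        simp [this]

/-- A `P₄`-sparse graph is `L`-integral if and only if it is a cograph. -/
theorem P4Sparse_LIntegral_iff_isCograph {V : Type*} [Fintype V] [DecidableEq V]
    (G : SimpleGraph V) [DecidableRel G.Adj] (hG : P4Sparse G) :
    LIntegral G ↔ IsCograph G := by
  constructor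
  · rintro hL s ⟨e⟩
    obtain ⟨a, b, c, d, h⟩ := exists_indPath_of_iso e
    exact not_LIntegral_of_indPath G hG h hL
  · intro hC μ hμ
    obtain ⟨x, hx0, hx⟩ := (mem_spectrum_iff _ _).1 hμ
    obtain ⟨a, ha⟩ := Function.ne_iff.1 hx0
    refine IsLapEig.integral _ hC.not_indPath (s := Finset.univ) rfl (x := x) ?_
      ⟨a, Finset.mem_univ a, ha⟩
    intro v _
    have hv := congrFun hx v
    rw [lap_apply, Pi.smul_apply, smul_eq_mul] at hv
    rw [← hv, ← card_neighborFinset_eq_degree, Finset.card_eq_sum_ones, neighborFinset_eq_filter,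
      Finset.sum_filter]
    push_cast
    rw [Finset.sum_mul, ← Finset.sum_sub_distrib]
    refine Finset.sum_congr rfl fun u _ => ?_
    split_ifs <;> simp
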